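/- arXiv:2507.19889 — 3 statements merged into one kernel-verified Lean document; each statement's English description precedes it below -/
import Mathlib

section
/- Under the IPW setup, the average direction treatment effect is identified from the observed data distribution: τ = atan2( E[(A/π(X)) sin Θ], E[(A/π(X)) cos Θ] ) − atan2( E[((1−A)/(1−π(X))) sin Θ], E[((1−A)/(1−π(X))) cos Θ] ). -/
open MeasureTheory ProbabilityTheory Filter Topology

/-- `atan2 y x` is the angle of the complex number `x + i y`. -/
noncomputable def atan2 (y x : ℝ) : ℝ := Complex.arg ((x : ℂ) + (y : ℂ) * Complex.I)

/-- Inverse-probability weighting identity. -/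
theorem ipw_key {Ω E γ : Type*} [mΩ : MeasurableSpace Ω] [mE : MeasurableSpace E]
    [MeasurableSpace γ] (μ : Measure Ω) [IsProbabilityMeasure μ]
    (X : Ω → E) (hX : Measurable X) (T : Ω → γ) (hT : Measurable T)
    (C : Set Ω) (hC : MeasurableSet C) (q : E → ℝ) (hq : Measurable q)
    (hq01 : ∀ x, 0 < q x ∧ q x < 1)
    (hcond : μ[C.indicator (fun _ => (1 : ℝ)) | MeasurableSpace.comap X mE]
      =ᵐ[μ] fun ω => q (X ω))
    (hCI : ∀ s, MeasurableSet s →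
      μ[(C ∩ T ⁻¹' s).indicator (fun _ => (1 : ℝ)) | MeasurableSpace.comap X mE] =ᵐ[μ]
      fun ω => (μ[C.indicator (fun _ => (1 : ℝ)) | MeasurableSpace.comap X mE]) ω *
        (μ[(T ⁻¹' s).indicator (fun _ => (1 : ℝ)) | MeasurableSpace.comap X mE]) ω)
    (g : γ → ℝ) (hg : Measurable g) :
    ∫ ω, (C.indicator (fun _ => (1 : ℝ)) ω / q (X ω)) * g (T ω) ∂μ = ∫ ω, g (T ω) ∂μ := by
  have hm : MeasurableSpace.comap X mE ≤ mΩ := hX.comap_le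
  -- the two measures on the covariate space
  have hν : ∀ s, MeasurableSet s → (μ.restrict (C ∩ T ⁻¹' s)).map X =
      ((μ.restrict (T ⁻¹' s)).map X).withDensity (fun x => ENNReal.ofReal (q x)) := by
    intro s hs
    have hTs : MeasurableSet (T ⁻¹' s) := hT hs
    ext B hB
    have hXB : MeasurableSet (X ⁻¹' B) := hX hB
    have hXB' : MeasurableSet[MeasurableSpace.comap X mE] (X ⁻¹' B) := ⟨B, hB, rfl⟩
    have hi : ∀ S, MeasurableSet S → Integrable (S.indicator (fun _ => (1 : ℝ))) μ :=
      fun S hS => (integrable_const _).indicator hS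
    have hqX : StronglyMeasurable[MeasurableSpace.comap X mE] (fun ω => q (X ω)) :=
      (hq.comp (comap_measurable X)).stronglyMeasurable
    have hprod : Integrable ((fun ω => q (X ω)) * (T ⁻¹' s).indicator (fun _ => (1 : ℝ))) μ := by
      refine (hi _ hTs).bdd_mul (c := 1) (hq.comp hX).aestronglyMeasurable ?_
      refine Eventually.of_forall fun ω => ?_
      rw [Real.norm_eq_abs, abs_of_pos (hq01 _).1]
      exact (hq01 _).2.le
    have hpull := condExp_mul_of_stronglyMeasurable_left hqX hprod (hi _ hTs)
    have hce : μ[(C ∩ T ⁻¹' s).indicator (fun _ => (1 : ℝ)) | MeasurableSpace.comap X mE] =ᵐ[μ]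
        μ[(fun ω => q (X ω)) * (T ⁻¹' s).indicator (fun _ => (1 : ℝ)) |
          MeasurableSpace.comap X mE] := by
      filter_upwards [hCI s hs, hcond, hpull] with ω h1 h2 h3
      rw [h1, h2, h3]; rfl
    have hint : ∫ ω in X ⁻¹' B, (C ∩ T ⁻¹' s).indicator (fun _ => (1 : ℝ)) ω ∂μ =
        ∫ ω in X ⁻¹' B, ((fun ω => q (X ω)) * (T ⁻¹' s).indicator (fun _ => (1 : ℝ))) ω ∂μ := by
      rw [← setIntegral_condExp hm (hi _ (hC.inter hTs)) hXB',
        ← setIntegral_condExp hm hprod hXB']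
      exact setIntegral_congr_ae hXB (hce.mono fun ω h _ => h)
    have h1 := ofReal_integral_eq_lintegral_ofReal (hi _ (hC.inter hTs)).integrableOn
      (μ := μ.restrict (X ⁻¹' B))
      (Eventually.of_forall fun ω => Set.indicator_nonneg (fun _ _ => zero_le_one) ω)
    have h2 := ofReal_integral_eq_lintegral_ofReal hprod.integrableOn
      (μ := μ.restrict (X ⁻¹' B))
      (Eventually.of_forall fun ω => mul_nonneg (hq01 _).1.le
        (Set.indicator_nonneg (fun _ _ => zero_le_one) ω))
    rw [hint, h2] at h1
    rw [withDensity_apply _ hB, setLIntegral_map hB hq.ennreal_ofReal hX,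
      Measure.map_apply hX hB, Measure.restrict_apply hXB, Measure.restrict_restrict hXB]
    have e1 : ∀ ω, ENNReal.ofReal ((C ∩ T ⁻¹' s).indicator (fun _ => (1 : ℝ)) ω) =
        (C ∩ T ⁻¹' s).indicator (fun _ => 1) ω := by
      intro ω
      by_cases h : ω ∈ C ∩ T ⁻¹' s
      · simp only [Set.indicator_of_mem h, ENNReal.ofReal_one]
      · simp only [Set.indicator_of_notMem h, ENNReal.ofReal_zero]
    have e2 : ∀ ω, ENNReal.ofReal (((fun ω => q (X ω)) *
          (T ⁻¹' s).indicator (fun _ => (1 : ℝ))) ω) =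
        (T ⁻¹' s).indicator (fun ω => ENNReal.ofReal (q (X ω))) ω := by
      intro ω; by_cases h : ω ∈ T ⁻¹' s <;> simp [Set.indicator, h]
    simp only [e1, e2] at h1
    rw [lintegral_indicator hTs, lintegral_indicator (hC.inter hTs),
      Measure.restrict_restrict hTs, setLIntegral_one,
      Measure.restrict_apply (hC.inter hTs)] at h1
    rw [Set.inter_comm, ← h1, Set.inter_comm]
  let w : Ω → ENNReal := fun ω => ENNReal.ofReal (C.indicator (fun _ => (1 : ℝ)) ω / q (X ω))
  have hwm : Measurable w :=
    ((measurable_const.indicator hC).div (hq.comp hX)).ennreal_ofReal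
  have hmap : (μ.withDensity w).map T = μ.map T := by
    ext s hs
    have hTs : MeasurableSet (T ⁻¹' s) := hT hs
    rw [Measure.map_apply hT hs, Measure.map_apply hT hs, withDensity_apply _ hTs]
    have e : w = C.indicator (fun ω => ENNReal.ofReal (1 / q (X ω))) := by
      funext ω
      by_cases h : ω ∈ C <;> simp [w, h]
    have hinv : Measurable (fun x => ENNReal.ofReal (1 / q x)) :=
      (measurable_const.div hq).ennreal_ofReal
    rw [e, lintegral_indicator hC, Measure.restrict_restrict hC, ← lintegral_map hinv hX, hν s hs,
      lintegral_withDensity_eq_lintegral_mul _ hq.ennreal_ofReal hinv]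
    have : ((fun x => ENNReal.ofReal (q x)) * fun x => ENNReal.ofReal (1 / q x)) = fun _ => 1 := by
      funext x
      rw [Pi.mul_apply, ← ENNReal.ofReal_mul (hq01 x).1.le, mul_one_div_cancel (hq01 x).1.ne',
        ENNReal.ofReal_one]
    rw [this, lintegral_one, Measure.map_apply hX MeasurableSet.univ]
    simp
  rw [← integral_map hT.aemeasurable hg.aestronglyMeasurable, ← hmap,
    integral_map hT.aemeasurable hg.aestronglyMeasurable,
    integral_withDensity_eq_integral_toReal_smul hwm
      (Eventually.of_forall fun ω => ENNReal.ofReal_lt_top)]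
  refine integral_congr_ae (Eventually.of_forall fun ω => ?_)
  simp only [w, smul_eq_mul]
  rw [ENNReal.toReal_ofReal]
  exact div_nonneg (Set.indicator_nonneg (fun _ _ => zero_le_one) ω) (hq01 _).1.le

/-- **Identification of the average direction treatment effect (ADTE).** -/
theorem adte_identified
    {Ω : Type*} [MeasurableSpace Ω] [StandardBorelSpace Ω] [Nonempty Ω]
    (μ : Measure Ω) [IsProbabilityMeasure μ] {p : ℕ}
    (A : Ω → ℝ) (X : Ω → (Fin p → ℝ)) (Θ1 Θ0 : Ω → ℝ)
    (hA : Measurable A) (hX : Measurable X) (hΘ1 : Measurable Θ1) (hΘ0 : Measurable Θ0)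
    (hA01 : ∀ ω, A ω = 0 ∨ A ω = 1)
    (ps : (Fin p → ℝ) → ℝ) (hps : Measurable ps)
    (hps01 : ∀ x, 0 < ps x ∧ ps x < 1)
    (hcond : μ[A | MeasurableSpace.comap X inferInstance] =ᵐ[μ] fun ω => ps (X ω))
    (hSI : CondIndepFun (MeasurableSpace.comap X inferInstance) hX.comap_le
      A (fun ω => (Θ1 ω, Θ0 ω)) μ)
    (Θ : Ω → ℝ) (hΘ : ∀ ω, Θ ω = A ω * Θ1 ω + (1 - A ω) * Θ0 ω)
    (α1 β1 α0 β0 : ℝ)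
    (hα1 : α1 = ∫ ω, Real.cos (Θ1 ω) ∂μ) (hβ1 : β1 = ∫ ω, Real.sin (Θ1 ω) ∂μ)
    (hα0 : α0 = ∫ ω, Real.cos (Θ0 ω) ∂μ) (hβ0 : β0 = ∫ ω, Real.sin (Θ0 ω) ∂μ)
    (τ : ℝ) (hτ : τ = atan2 β1 α1 - atan2 β0 α0) :
    τ = atan2 (∫ ω, (A ω / ps (X ω)) * Real.sin (Θ ω) ∂μ)
              (∫ ω, (A ω / ps (X ω)) * Real.cos (Θ ω) ∂μ)
      - atan2 (∫ ω, ((1 - A ω) / (1 - ps (X ω))) * Real.sin (Θ ω) ∂μ)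
              (∫ ω, ((1 - A ω) / (1 - ps (X ω))) * Real.cos (Θ ω) ∂μ) := by
  have hT : Measurable (fun ω => (Θ1 ω, Θ0 ω)) := hΘ1.prodMk hΘ0
  have hCI := (condIndepFun_iff_condExp_inter_preimage_eq_mul hA hT).1 hSI
  have hC1 : MeasurableSet (A ⁻¹' {1}) := hA (measurableSet_singleton 1)
  have hC0 : MeasurableSet (A ⁻¹' {0}) := hA (measurableSet_singleton 0)
  have i1 : ∀ ω, (A ⁻¹' {1}).indicator (fun _ => (1 : ℝ)) ω = A ω := by
    intro ω
    rcases hA01 ω with h | h <;> simp [Set.indicator, h]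
  have i0 : ∀ ω, (A ⁻¹' {0}).indicator (fun _ => (1 : ℝ)) ω = 1 - A ω := by
    intro ω
    rcases hA01 ω with h | h <;> simp [Set.indicator, h]
  have c1 : μ[(A ⁻¹' {1}).indicator (fun _ => (1 : ℝ)) | MeasurableSpace.comap X inferInstance]
      =ᵐ[μ] fun ω => ps (X ω) := by
    rw [funext i1]; exact hcond
  have hAi : Integrable A μ := by
    rw [← funext i1]; exact (integrable_const _).indicator hC1
  have c0 : μ[(A ⁻¹' {0}).indicator (fun _ => (1 : ℝ)) | MeasurableSpace.comap X inferInstance]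
      =ᵐ[μ] fun ω => (fun x => 1 - ps x) (X ω) := by
    rw [funext i0]
    have h := condExp_sub (integrable_const (1 : ℝ)) hAi
      (MeasurableSpace.comap X inferInstance) (μ := μ)
    rw [condExp_const hX.comap_le] at h
    refine EventuallyEq.trans h ?_
    filter_upwards [hcond] with ω hω
    simp [hω]
  have k1 := ipw_key μ X hX _ hT _ hC1 ps hps hps01 c1
    (fun s hs => hCI _ s (measurableSet_singleton 1) hs)
  have k0 := ipw_key μ X hX _ hT _ hC0 (fun x => 1 - ps x) (measurable_const.sub hps)
    (fun x => ⟨by linarith [(hps01 x).2], by linarith [(hps01 x).1]⟩) c0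
    (fun s hs => hCI _ s (measurableSet_singleton 0) hs)
  simp only [i1] at k1
  simp only [i0] at k0
  have r1 : ∀ (f : ℝ → ℝ), Measurable f →
      ∫ ω, (A ω / ps (X ω)) * f (Θ ω) ∂μ = ∫ ω, f (Θ1 ω) ∂μ := by
    intro f hf
    rw [← k1 (fun z => f z.1) (hf.comp measurable_fst)]
    congr 1; funext ω
    rcases hA01 ω with h | h <;> simp [hΘ, h]
  have r0 : ∀ (f : ℝ → ℝ), Measurable f →
      ∫ ω, ((1 - A ω) / (1 - ps (X ω))) * f (Θ ω) ∂μ = ∫ ω, f (Θ0 ω) ∂μ := by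
    intro f hf
    rw [← k0 (fun z => f z.2) (hf.comp measurable_snd)]
    congr 1; funext ω
    rcases hA01 ω with h | h <;> simp [hΘ, h]
  rw [r1 _ Real.measurable_sin, r1 _ Real.measurable_cos, r0 _ Real.measurable_sin,
    r0 _ Real.measurable_cos, hτ, hα1, hβ1, hα0, hβ0]
end

section
/- Under the IPW setup, the average length treatment effect is identified from the observed data distribution: ξ = ( E[(A/π(X)) cos Θ]² + E[(A/π(X)) sin Θ]² )^{1/2} − ( E[((1−A)/(1−π(X))) cos Θ]² + E[((1−A)/(1−π(X))) sin Θ]² )^{1/2}. -/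
open MeasureTheory ProbabilityTheory Filter Topology

/-- Conditional expectations factor for conditionally independent real variables. -/
theorem condExp_mul_aux {Ω : Type*} (m : MeasurableSpace Ω) [mΩ : MeasurableSpace Ω] [StandardBorelSpace Ω]
    (μ : Measure Ω) [IsProbabilityMeasure μ] (hm : m ≤ mΩ)
    (U V : Ω → ℝ) (hU : Measurable U) (hV : Measurable V)
    (hUi : Integrable U μ) (hVi : Integrable V μ) (hUVi : Integrable (U * V) μ)
    (hind : CondIndepFun m hm U V μ) :
    μ[U * V | m] =ᵐ[μ] μ[U | m] * μ[V | m] := by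
  have h := ae_of_ae_trim hm ((condIndepFun_iff_map_prod_eq_prod_map_map hU hV).1 hind)
  filter_upwards [h, condExp_ae_eq_integral_condExpKernel hm hUi,
    condExp_ae_eq_integral_condExpKernel hm hVi,
    condExp_ae_eq_integral_condExpKernel hm hUVi] with ω h1 h2 h3 h4
  rw [Pi.mul_apply, h2, h3, h4]
  have hi : IndepFun U V (condExpKernel μ m ω) := by
    rw [indepFun_iff_map_prod_eq_prod_map_map hU.aemeasurable hV.aemeasurable]
    rw [Kernel.map_apply _ (hU.prodMk hV), Kernel.prod_apply, Kernel.map_apply _ hU,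
      Kernel.map_apply _ hV] at h1
    exact h1
  exact hi.integral_fun_mul_eq_mul_integral hU.aestronglyMeasurable hV.aestronglyMeasurable

/-- The inverse-probability weight is integrable. -/
theorem weight_integrable {Ω : Type*} (m : MeasurableSpace Ω) [mΩ : MeasurableSpace Ω]
    (μ : Measure Ω) [IsProbabilityMeasure μ] (hm : m ≤ mΩ)
    (U e : Ω → ℝ) (hUi : Integrable U μ) (hU0 : ∀ ω, 0 ≤ U ω)
    (he : Measurable[m] e) (he0 : ∀ ω, 0 < e ω) (hce : μ[U | m] =ᵐ[μ] e) :
    Integrable (e⁻¹ * U) μ := by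
  let φ : ℕ → Set Ω := fun n => {ω | (e ω)⁻¹ ≤ n}
  have hinv : Measurable[m] (e⁻¹) := he.inv
  have hφm : ∀ n, MeasurableSet[m] (φ n) := fun n => measurableSet_le hinv measurable_const
  have hφ : AECover μ atTop φ := by
    refine ⟨ae_of_all _ fun ω => ?_, fun n => hm _ (hφm n)⟩
    obtain ⟨N, hN⟩ := exists_nat_ge (e ω)⁻¹
    filter_upwards [eventually_ge_atTop N] with n hn
    exact hN.trans (by exact_mod_cast hn)
  have hbd : ∀ n ω, ‖(φ n).indicator (e⁻¹) ω‖ ≤ n := by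
    intro n ω
    by_cases h : ω ∈ φ n
    · rw [Set.indicator_of_mem h, Pi.inv_apply, Real.norm_of_nonneg (inv_pos.2 (he0 ω)).le]
      exact h
    · rw [Set.indicator_of_notMem h]; simp
  have hsm : ∀ n, StronglyMeasurable[m] ((φ n).indicator (e⁻¹)) :=
    fun n => (hinv.indicator (hφm n)).stronglyMeasurable
  have heq : ∀ n, (φ n).indicator (e⁻¹ * U) = (φ n).indicator (e⁻¹) * U := by
    intro n; ext ω
    by_cases h : ω ∈ φ n <;> simp [h]
  have hint : ∀ n, Integrable ((φ n).indicator (e⁻¹) * U) μ := fun n =>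
    hUi.bdd_mul ((hsm n).mono hm).aestronglyMeasurable (ae_of_all _ (hbd n))
  refine hφ.integrable_of_integral_bounded_of_nonneg_ae 1 (fun n => ?_)
    (ae_of_all _ fun ω => mul_nonneg (inv_pos.2 (he0 ω)).le (hU0 ω))
    (Eventually.of_forall fun n => ?_)
  · rw [← integrable_indicator_iff (hm _ (hφm n)), heq]; exact hint n
  · rw [← integral_indicator (hm _ (hφm n)), heq, ← integral_condExp hm]
    have h1 := condExp_mul_of_stronglyMeasurable_left (hsm n) (hint n) hUi
    calc ∫ ω, (μ[(φ n).indicator (e⁻¹) * U | m]) ω ∂μ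
        ≤ ∫ ω, (1 : ℝ) ∂μ := by
          refine integral_mono_ae integrable_condExp (integrable_const _) ?_
          filter_upwards [h1, hce] with ω h2 h3
          rw [h2, Pi.mul_apply, h3]
          by_cases h : ω ∈ φ n
          · simp [h, (he0 ω).ne']
          · simp [h]
      _ = 1 := by simp

/-- Inverse-probability weighting identity. -/
theorem ipw_aux {Ω : Type*} (m : MeasurableSpace Ω) [mΩ : MeasurableSpace Ω] [StandardBorelSpace Ω]
    (μ : Measure Ω) [IsProbabilityMeasure μ] (hm : m ≤ mΩ)
    (U V e : Ω → ℝ) (hU : Measurable U) (hV : Measurable V)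
    (hUi : Integrable U μ) (hU0 : ∀ ω, 0 ≤ U ω) (hVb : ∀ ω, ‖V ω‖ ≤ 1)
    (he : Measurable[m] e) (he0 : ∀ ω, 0 < e ω) (hce : μ[U | m] =ᵐ[μ] e)
    (hind : CondIndepFun m hm U V μ) :
    ∫ ω, (U ω / e ω) * V ω ∂μ = ∫ ω, V ω ∂μ := by
  have hinv : Measurable[m] (e⁻¹) := he.inv
  have hVi : Integrable V μ :=
    Integrable.of_bound hV.aestronglyMeasurable 1 (ae_of_all _ hVb)
  have hUVi : Integrable (U * V) μ :=
    hUi.mul_bdd hV.aestronglyMeasurable (ae_of_all _ hVb)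
  have hw : Integrable (e⁻¹ * (U * V)) μ := by
    rw [← mul_assoc]
    exact (weight_integrable m μ hm U e hUi hU0 he he0 hce).mul_bdd
      hV.aestronglyMeasurable (ae_of_all _ hVb)
  have h1 := condExp_mul_of_stronglyMeasurable_left hinv.stronglyMeasurable hw hUVi
  have h2 := condExp_mul_aux m μ hm U V hU hV hUi hVi hUVi hind
  calc ∫ ω, (U ω / e ω) * V ω ∂μ = ∫ ω, (e⁻¹ * (U * V)) ω ∂μ := by
        congr 1; ext ω; simp only [Pi.mul_apply, Pi.inv_apply]; ring
    _ = ∫ ω, (μ[e⁻¹ * (U * V) | m]) ω ∂μ := (integral_condExp hm).symm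
    _ = ∫ ω, (μ[V | m]) ω ∂μ := by
        refine integral_congr_ae ?_
        filter_upwards [h1, h2, hce] with ω a b c
        rw [a, Pi.mul_apply, b, Pi.mul_apply, c, Pi.inv_apply,
          inv_mul_cancel_left₀ (he0 ω).ne']
    _ = ∫ ω, V ω ∂μ := integral_condExp hm


/-- **Identification of the average length treatment effect (ALTE).** -/
theorem alte_identified
    {Ω : Type*} [MeasurableSpace Ω] [StandardBorelSpace Ω] [Nonempty Ω]
    (μ : Measure Ω) [IsProbabilityMeasure μ] {p : ℕ}
    (A : Ω → ℝ) (X : Ω → (Fin p → ℝ)) (Θ1 Θ0 : Ω → ℝ)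
    (hA : Measurable A) (hX : Measurable X) (hΘ1 : Measurable Θ1) (hΘ0 : Measurable Θ0)
    (hA01 : ∀ ω, A ω = 0 ∨ A ω = 1)
    (ps : (Fin p → ℝ) → ℝ) (hps : Measurable ps)
    (hps01 : ∀ x, 0 < ps x ∧ ps x < 1)
    (hcond : μ[A | MeasurableSpace.comap X inferInstance] =ᵐ[μ] fun ω => ps (X ω))
    (hSI : CondIndepFun (MeasurableSpace.comap X inferInstance) hX.comap_le
      A (fun ω => (Θ1 ω, Θ0 ω)) μ)
    (Θ : Ω → ℝ) (hΘ : ∀ ω, Θ ω = A ω * Θ1 ω + (1 - A ω) * Θ0 ω)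
    (α1 β1 α0 β0 : ℝ)
    (hα1 : α1 = ∫ ω, Real.cos (Θ1 ω) ∂μ) (hβ1 : β1 = ∫ ω, Real.sin (Θ1 ω) ∂μ)
    (hα0 : α0 = ∫ ω, Real.cos (Θ0 ω) ∂μ) (hβ0 : β0 = ∫ ω, Real.sin (Θ0 ω) ∂μ)
    (ξ : ℝ) (hξ : ξ = Real.sqrt (α1 ^ 2 + β1 ^ 2) - Real.sqrt (α0 ^ 2 + β0 ^ 2)) :
    ξ = Real.sqrt ((∫ ω, (A ω / ps (X ω)) * Real.cos (Θ ω) ∂μ) ^ 2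
          + (∫ ω, (A ω / ps (X ω)) * Real.sin (Θ ω) ∂μ) ^ 2)
      - Real.sqrt ((∫ ω, ((1 - A ω) / (1 - ps (X ω))) * Real.cos (Θ ω) ∂μ) ^ 2
          + (∫ ω, ((1 - A ω) / (1 - ps (X ω))) * Real.sin (Θ ω) ∂μ) ^ 2) := by
  have hm := hX.comap_le
  have hAi : Integrable A μ := Integrable.of_bound hA.aestronglyMeasurable 1
    (ae_of_all _ fun ω => by rcases hA01 ω with h | h <;> simp [h])
  have hpm : Measurable[MeasurableSpace.comap X inferInstance] (fun ω => ps (X ω)) :=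
    hps.comp (comap_measurable X)
  have hA' : Measurable (fun ω => 1 - A ω) := measurable_const.sub hA
  have hcond0 : μ[fun ω => 1 - A ω | MeasurableSpace.comap X inferInstance]
      =ᵐ[μ] fun ω => 1 - ps (X ω) := by
    have h := condExp_sub (integrable_const (1 : ℝ)) hAi (MeasurableSpace.comap X inferInstance)
    rw [condExp_const hm] at h
    filter_upwards [h, hcond] with ω h1 h2
    exact h1.trans (by rw [Pi.sub_apply, h2])
  have key1 : ∀ f : ℝ → ℝ, Measurable f → (∀ x, ‖f x‖ ≤ 1) →
      ∫ ω, (A ω / ps (X ω)) * f (Θ ω) ∂μ = ∫ ω, f (Θ1 ω) ∂μ := by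
    intro f hf hb
    rw [← ipw_aux _ μ hm A (fun ω => f (Θ1 ω)) (fun ω => ps (X ω)) hA (hf.comp hΘ1) hAi
      (fun ω => by rcases hA01 ω with h | h <;> simp [h]) (fun ω => hb _) hpm
      (fun ω => (hps01 _).1) hcond
      (hSI.comp (φ := id) (ψ := fun q : ℝ × ℝ => f q.1) measurable_id (hf.comp measurable_fst))]
    congr 1; ext ω
    rcases hA01 ω with h | h <;> simp [h, hΘ]
  have key0 : ∀ f : ℝ → ℝ, Measurable f → (∀ x, ‖f x‖ ≤ 1) →
      ∫ ω, ((1 - A ω) / (1 - ps (X ω))) * f (Θ ω) ∂μ = ∫ ω, f (Θ0 ω) ∂μ := by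
    intro f hf hb
    rw [← ipw_aux _ μ hm (fun ω => 1 - A ω) (fun ω => f (Θ0 ω)) (fun ω => 1 - ps (X ω)) hA'
      (hf.comp hΘ0) ((integrable_const _).sub hAi)
      (fun ω => by rcases hA01 ω with h | h <;> simp [h]) (fun ω => hb _)
      (measurable_const.sub hpm)
      (fun ω => sub_pos.2 (hps01 _).2) hcond0
      (hSI.comp (φ := fun a : ℝ => 1 - a) (ψ := fun q : ℝ × ℝ => f q.2)
        (measurable_const.sub measurable_id) (hf.comp measurable_snd))]
    congr 1; ext ω
    rcases hA01 ω with h | h <;> simp [h, hΘ]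
  rw [key1 _ Real.measurable_cos Real.abs_cos_le_one, key1 _ Real.measurable_sin Real.abs_sin_le_one,
    key0 _ Real.measurable_cos Real.abs_cos_le_one, key0 _ Real.measurable_sin Real.abs_sin_le_one,
    hξ, hα1, hβ1, hα0, hβ0]
end

section
/- Under the IPW setup, the cross-arm products of HT estimating functions have expectation equal to minus the product of the corresponding moments: E[ ( (A/π(X)) cos Θ − α^(1) ) · ( ((1−A)/(1−π(X))) cos Θ − α^(0) ) ] = −α^(1) α^(0). -/
open MeasureTheory ProbabilityTheory Filter Topology

/-- For conditionally independent bounded real variables the conditional expectation of the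
product is the product of the conditional expectations. -/
lemma condExp_mul_of_condIndepFun
    {Ω : Type*} {m mΩ : MeasurableSpace Ω} [StandardBorelSpace Ω] (hm : m ≤ mΩ)
    (μ : Measure Ω) [IsProbabilityMeasure μ] (B C : Ω → ℝ)
    (hB : Measurable B) (hC : Measurable C)
    (hBi : Integrable B μ) (hCi : Integrable C μ) (hBC : Integrable (fun ω => B ω * C ω) μ)
    (h : CondIndepFun m hm B C μ) :
    μ[fun ω => B ω * C ω | m] =ᵐ[μ] fun ω => (μ[B | m]) ω * (μ[C | m]) ω := by
  have h1 := ae_of_ae_trim hm ((condIndepFun_iff_map_prod_eq_prod_map_map hB hC).1 h)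
  filter_upwards [h1, condExp_ae_eq_integral_condExpKernel hm hBi,
    condExp_ae_eq_integral_condExpKernel hm hCi,
    condExp_ae_eq_integral_condExpKernel hm hBC] with ω h1 h2 h3 h4
  rw [h2, h3, h4]
  rw [Kernel.map_apply _ (hB.prodMk hC), Kernel.prod_apply, Kernel.map_apply _ hB,
    Kernel.map_apply _ hC] at h1
  have hind : IndepFun B C (condExpKernel μ m ω) :=
    (indepFun_iff_map_prod_eq_prod_map_map hB.aemeasurable hC.aemeasurable).2 h1
  exact hind.integral_fun_mul_eq_mul_integral hB.aestronglyMeasurable hC.aestronglyMeasurable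

/-- Horvitz-Thompson identity for one arm, with integrability. -/
lemma ht_arm
    {Ω : Type*} {m mΩ : MeasurableSpace Ω} [StandardBorelSpace Ω] (hm : m ≤ mΩ)
    (μ : Measure Ω) [IsProbabilityMeasure μ] (B C q : Ω → ℝ)
    (hB : Measurable B) (hC : Measurable C) (hq : Measurable[m] q)
    (hB01 : ∀ ω, B ω = 0 ∨ B ω = 1) (hC1 : ∀ ω, |C ω| ≤ 1)
    (hq01 : ∀ ω, 0 < q ω ∧ q ω < 1)
    (hcond : μ[B | m] =ᵐ[μ] q)
    (h : CondIndepFun m hm B C μ)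
    (hw : Integrable (fun ω => B ω / (q ω) ^ 2) μ) :
    Integrable (fun ω => B ω / q ω * C ω) μ ∧ ∫ ω, B ω / q ω * C ω ∂μ = ∫ ω, C ω ∂μ := by
  have hqm : Measurable q := hq.mono hm le_rfl
  have hB0 : ∀ ω, |B ω| ≤ 1 := fun ω => by rcases hB01 ω with h | h <;> simp [h]
  have hBi : Integrable B μ :=
    Integrable.of_bound hB.aestronglyMeasurable 1 (ae_of_all _ hB0)
  have hCi : Integrable C μ :=
    Integrable.of_bound hC.aestronglyMeasurable 1 (ae_of_all _ hC1)
  have hBC : Integrable (fun ω => B ω * C ω) μ := by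
    refine Integrable.of_bound (hB.mul hC).aestronglyMeasurable 1 (ae_of_all _ fun ω => ?_)
    rw [Real.norm_eq_abs, abs_mul]
    exact mul_le_one₀ (hB0 ω) (abs_nonneg _) (hC1 ω)
  have hint : Integrable (fun ω => B ω / q ω * C ω) μ := by
    refine hw.mono' ((hB.div hqm).mul hC).aestronglyMeasurable (ae_of_all _ fun ω => ?_)
    obtain ⟨h0, h1⟩ := hq01 ω
    rw [Real.norm_eq_abs, abs_mul]
    rcases hB01 ω with hb | hb
    · simp [hb]
    · rw [hb, abs_of_pos (by positivity)]
      calc 1 / q ω * |C ω| ≤ 1 / q ω * 1 := by gcongr; exact hC1 ω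
        _ ≤ 1 / q ω ^ 2 := by
          rw [mul_one]
          apply one_div_le_one_div_of_le (by positivity)
          nlinarith
  refine ⟨hint, ?_⟩
  have heq : (fun ω => B ω / q ω * C ω) = (fun ω => (q ω)⁻¹) * fun ω => B ω * C ω := by
    funext ω
    simp only [Pi.mul_apply]
    ring
  have hpull := condExp_mul_of_stronglyMeasurable_left (m := m) (μ := μ)
    (f := fun ω => (q ω)⁻¹) (g := fun ω => B ω * C ω) hq.inv.stronglyMeasurable
    (by rw [← heq]; exact hint) hBC
  rw [← heq] at hpull
  have hprod := condExp_mul_of_condIndepFun hm μ B C hB hC hBi hCi hBC h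
  rw [← integral_condExp hm (f := fun ω => B ω / q ω * C ω), ← integral_condExp hm (f := C)]
  apply integral_congr_ae
  filter_upwards [hpull, hprod, hcond] with ω e1 e2 e3
  rw [e1, Pi.mul_apply, e2, e3]
  have := (hq01 ω).1.ne'
  field_simp

/-- **Cross-arm product of HT cosine estimating functions.** -/
theorem ht_cross_arm_cos_cos
    {Ω : Type*} [MeasurableSpace Ω] [StandardBorelSpace Ω] [Nonempty Ω]
    (μ : Measure Ω) [IsProbabilityMeasure μ] {p : ℕ}
    (A : Ω → ℝ) (X : Ω → (Fin p → ℝ)) (Θ1 Θ0 : Ω → ℝ)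
    (hA : Measurable A) (hX : Measurable X) (hΘ1 : Measurable Θ1) (hΘ0 : Measurable Θ0)
    (hA01 : ∀ ω, A ω = 0 ∨ A ω = 1)
    (ps : (Fin p → ℝ) → ℝ) (hps : Measurable ps)
    (hps01 : ∀ x, 0 < ps x ∧ ps x < 1)
    (hcond : μ[A | MeasurableSpace.comap X inferInstance] =ᵐ[μ] fun ω => ps (X ω))
    (hSI : CondIndepFun (MeasurableSpace.comap X inferInstance) hX.comap_le
      A (fun ω => (Θ1 ω, Θ0 ω)) μ)
    (Θ : Ω → ℝ) (hΘ : ∀ ω, Θ ω = A ω * Θ1 ω + (1 - A ω) * Θ0 ω)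
    (hw1 : Integrable (fun ω => A ω / (ps (X ω)) ^ 2) μ)
    (hw0 : Integrable (fun ω => (1 - A ω) / (1 - ps (X ω)) ^ 2) μ)
    (α1 α0 : ℝ)
    (hα1 : α1 = ∫ ω, Real.cos (Θ1 ω) ∂μ) (hα0 : α0 = ∫ ω, Real.cos (Θ0 ω) ∂μ) :
    ∫ ω, ((A ω / ps (X ω)) * Real.cos (Θ ω) - α1)
        * (((1 - A ω) / (1 - ps (X ω))) * Real.cos (Θ ω) - α0) ∂μ
      = -(α1 * α0) := by
  have hm := hX.comap_le
  have hqX : Measurable[MeasurableSpace.comap X inferInstance] (fun ω => ps (X ω)) :=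
    hps.comp (comap_measurable X)
  have hAi : Integrable A μ := by
    refine Integrable.of_bound hA.aestronglyMeasurable 1 (ae_of_all _ fun ω => ?_)
    rcases hA01 ω with h | h <;> simp [h]
  have hI1 := hSI.comp (φ := fun a : ℝ => a) (ψ := fun z : ℝ × ℝ => Real.cos z.1)
    measurable_id (by fun_prop)
  have hI0 := hSI.comp (φ := fun a : ℝ => 1 - a) (ψ := fun z : ℝ × ℝ => Real.cos z.2)
    (by fun_prop) (by fun_prop)
  have hcond0 : μ[fun ω => 1 - A ω | MeasurableSpace.comap X inferInstance]
      =ᵐ[μ] fun ω => 1 - ps (X ω) := by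
    have hs := condExp_sub (μ := μ) (integrable_const (1 : ℝ)) hAi
      (MeasurableSpace.comap X inferInstance)
    rw [condExp_const hm] at hs
    filter_upwards [hs, hcond] with ω e1 e2
    rw [← e2]
    exact e1
  obtain ⟨i1, e1⟩ := ht_arm hm μ A (fun ω => Real.cos (Θ1 ω)) (fun ω => ps (X ω)) hA
    (by fun_prop) hqX hA01 (fun ω => Real.abs_cos_le_one _) (fun ω => hps01 _) hcond hI1 hw1
  obtain ⟨i0, e0⟩ := ht_arm hm μ (fun ω => 1 - A ω) (fun ω => Real.cos (Θ0 ω))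
    (fun ω => 1 - ps (X ω)) (by fun_prop)
    (by fun_prop) (measurable_const.sub hqX)
    (fun ω => by rcases hA01 ω with h | h <;> simp [h])
    (fun ω => Real.abs_cos_le_one _)
    (fun ω => ⟨by linarith [(hps01 (X ω)).2], by linarith [(hps01 (X ω)).1]⟩) hcond0 hI0 hw0
  have hpt : ∀ ω, ((A ω / ps (X ω)) * Real.cos (Θ ω) - α1)
        * (((1 - A ω) / (1 - ps (X ω))) * Real.cos (Θ ω) - α0)
      = α1 * α0 - α0 * (A ω / ps (X ω) * Real.cos (Θ1 ω))
        - α1 * ((1 - A ω) / (1 - ps (X ω)) * Real.cos (Θ0 ω)) := by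
    intro ω
    rw [hΘ ω]
    rcases hA01 ω with h | h
    · simp only [h, zero_div, zero_mul, sub_zero, one_mul, zero_add, mul_zero]
      ring
    · simp only [h, sub_self, zero_div, zero_mul, one_mul, add_zero, mul_zero]
      ring
  simp_rw [hpt]
  have i2 : Integrable (fun ω => α1 * α0 - α0 * (A ω / ps (X ω) * Real.cos (Θ1 ω))) μ :=
    (integrable_const _).sub (i1.const_mul _)
  rw [integral_sub i2 (i0.const_mul _),
    integral_sub (integrable_const _) (i1.const_mul _), integral_const_mul, integral_const_mul, integral_const_mul,
    e1, e0, ← hα1, ← hα0]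
  simp
  ring
end
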